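/- Let f ∈ ℤ[t] be a square-free polynomial whose coefficients have no common factor and have absolute value at most H. Then for D ≤ H^A, the sum over square-free d > D of ρ_f(d²)/d² is O(D^(-1)·H^ε). -/

import Mathlib

open scoped Classical

/-- Number of roots of `f` modulo `m` in `[1, m]`. -/
def polyRho (f : Polynomial ℤ) (m : ℕ) : ℕ :=
  ((Finset.Icc 1 m).filter (fun n : ℕ => (m : ℤ) ∣ f.eval (n : ℤ))).card

/-!
The resultant `R` of `f` and `f'`, an integer of size `H ^ O(1)` in the ideal `(f, f')`, plays the
role of the discriminant. If `p ∤ R`, then `f' (x)` is a unit modulo `p` at every root `x` of `f`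
modulo `p`, so each root has at most one lift modulo `p ^ 2` and `ρ (p ^ 2) ≤ deg f`; if `p ∣ R`,
then trivially `ρ (p ^ 2) ≤ p * deg f`. Hence `ρ (e ^ 2) ≤ (deg f) ^ ω e * gcd (R, e)` for
square-free `e`. The divisor bound absorbs `(deg f) ^ ω e` into a small power of `e`, Rankin's trick
then bounds the tail by a multiple of `τ (R) * D ^ (δ - 1)`, and both `τ (R)` and `D ^ δ` are at
most small powers of `H`.
-/

open Polynomial ArithmeticFunction.omega

theorem add_one_le_mul_two_rpow {η x : ℝ} (hη : 0 < η) (hx : 0 ≤ x) :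
    x + 1 ≤ (1 + (η * Real.log 2)⁻¹) * 2 ^ (x * η) := by
  have hL : 0 < η * Real.log 2 := mul_pos hη (Real.log_pos one_lt_two)
  calc x + 1 ≤ (1 + (η * Real.log 2)⁻¹) * (x * (η * Real.log 2) + 1) := by
        have : 0 ≤ x * (η * Real.log 2) + (η * Real.log 2)⁻¹ := by positivity
        linear_combination this - x * inv_mul_cancel₀ hL.ne'
    _ ≤ (1 + (η * Real.log 2)⁻¹) * 2 ^ (x * η) := by
        rw [Real.rpow_def_of_pos two_pos, show Real.log 2 * (x * η) = x * (η * Real.log 2) by ring]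
        gcongr
        exact Real.add_one_le_exp _

theorem add_one_le_pow_rpow {η x : ℝ} (hx : 0 ≤ x) (hxη : 2 ≤ x ^ η) (a : ℕ) :
    (a : ℝ) + 1 ≤ (x ^ a) ^ η :=
  calc (a : ℝ) + 1 ≤ 2 ^ a := mod_cast Nat.lt_two_pow_self
    _ ≤ (x ^ η) ^ a := by gcongr
    _ = (x ^ a) ^ η := Real.rpow_pow_comm hx η a

theorem exists_add_one_le_ite_mul_pow_rpow {η : ℝ} (hη : 0 < η) :
    ∃ (K : ℝ) (N : ℕ), 1 ≤ K ∧ ∀ (p a : ℕ), 2 ≤ p →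
      (a : ℝ) + 1 ≤ (if p < N then K else 1) * ((p : ℝ) ^ a) ^ η := by
  obtain ⟨N, hN⟩ := Filter.eventually_atTop.mp
    (((tendsto_rpow_atTop hη).comp tendsto_natCast_atTop_atTop).eventually_ge_atTop 2)
  refine ⟨1 + (η * Real.log 2)⁻¹, N, le_add_of_nonneg_right ?_, fun p a hp => ?_⟩
  · exact inv_nonneg.mpr (mul_pos hη (Real.log_pos one_lt_two)).le
  have hp' : (2 : ℝ) ≤ p := mod_cast hp
  split_ifs with hpN
  · calc (a : ℝ) + 1 ≤ (1 + (η * Real.log 2)⁻¹) * 2 ^ (a * η) :=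
          add_one_le_mul_two_rpow hη a.cast_nonneg
      _ = (1 + (η * Real.log 2)⁻¹) * ((2 : ℝ) ^ a) ^ η := by
          rw [Real.rpow_natCast_mul two_pos.le]
      _ ≤ (1 + (η * Real.log 2)⁻¹) * ((p : ℝ) ^ a) ^ η := by gcongr
  · rw [one_mul]
    exact add_one_le_pow_rpow p.cast_nonneg (hN p (not_lt.mp hpN)) a

theorem exists_card_divisors_le_rpow {η : ℝ} (hη : 0 < η) :
    ∃ C : ℝ, 0 < C ∧ ∀ n : ℕ, (n.divisors.card : ℝ) ≤ C * (n : ℝ) ^ η := by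
  obtain ⟨K, N, hK, hfactor⟩ := exists_add_one_le_ite_mul_pow_rpow hη
  refine ⟨K ^ N, by positivity, fun n => ?_⟩
  rcases eq_or_ne n 0 with rfl | hn
  · simpa using by positivity
  have hcard : (n.primeFactors.filter (· < N)).card ≤ N :=
    (Finset.card_le_card fun p hp => Finset.mem_range.mpr (Finset.mem_filter.mp hp).2).trans_eq
      (Finset.card_range N)
  calc (n.divisors.card : ℝ) = ∏ p ∈ n.primeFactors, ((n.factorization p : ℝ) + 1) := by
        rw [Nat.card_divisors hn]
        push_cast
        rfl
    _ ≤ ∏ p ∈ n.primeFactors, (if p < N then K else 1) * ((p : ℝ) ^ n.factorization p) ^ η :=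
        Finset.prod_le_prod (fun _ _ => by positivity) fun p hp =>
          hfactor p _ (Nat.prime_of_mem_primeFactors hp).two_le
    _ = K ^ (n.primeFactors.filter (· < N)).card * (n : ℝ) ^ η := by
        rw [Finset.prod_mul_distrib, Real.finsetProd_rpow _ _ (fun _ _ => by positivity),
          ← Finset.prod_filter, Finset.prod_const]
        congr 2
        exact_mod_cast Nat.prod_factorization_pow_eq_self hn
    _ ≤ K ^ N * (n : ℝ) ^ η := by gcongr

theorem two_pow_cardDistinctFactors_le_card_divisors {n : ℕ} (hn : n ≠ 0) :
    2 ^ ω n ≤ n.divisors.card := by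
  rw [Nat.card_divisors hn]
  refine Finset.pow_card_le_prod n.primeFactors _ 2 fun p hp => ?_
  exact Nat.succ_le_succ <| (Nat.prime_of_mem_primeFactors hp).factorization_pos_of_dvd hn
    (Nat.dvd_of_mem_primeFactors hp)

theorem exists_pow_cardDistinctFactors_le_rpow (k : ℕ) {η : ℝ} (hη : 0 < η) :
    ∃ C : ℝ, 0 < C ∧ ∀ n : ℕ, n ≠ 0 → (k : ℝ) ^ ω n ≤ C * (n : ℝ) ^ η := by
  obtain ⟨C, hC, hdiv⟩ := exists_card_divisors_le_rpow (η := η / (k + 1)) (by positivity)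
  refine ⟨C ^ (k + 1), by positivity, fun n hn => ?_⟩
  calc (k : ℝ) ^ ω n ≤ (2 ^ (k + 1)) ^ ω n := by
        gcongr
        exact_mod_cast (k.lt_succ_self.trans Nat.lt_two_pow_self).le
    _ = ((2 : ℕ) ^ ω n : ℝ) ^ (k + 1) := by rw [pow_right_comm]; norm_cast
    _ ≤ (n.divisors.card : ℝ) ^ (k + 1) := by
        gcongr
        exact_mod_cast two_pow_cardDistinctFactors_le_card_divisors hn
    _ ≤ (C * (n : ℝ) ^ (η / (k + 1))) ^ (k + 1) := by
        gcongr
        exact hdiv n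
    _ = C ^ (k + 1) * (n : ℝ) ^ η := by
        rw [mul_pow, ← Real.rpow_mul_natCast n.cast_nonneg]
        push_cast
        rw [div_mul_cancel₀ η (by positivity)]

section GcdSum

variable {s t D : ℝ}

theorem hasSum_ite_dvd_rpow_neg (hs : 1 < s) {g : ℕ} (hg : g ≠ 0) :
    HasSum (fun e : ℕ => if g ∣ e then (e : ℝ) ^ (-s) else 0)
      ((g : ℝ) ^ (-s) * ∑' n : ℕ, (n : ℝ) ^ (-s)) := by
  have hzeta : Summable fun n : ℕ => (n : ℝ) ^ (-s) := Real.summable_nat_rpow.mpr (neg_lt_neg hs)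
  rw [← (mul_right_injective₀ hg).hasSum_iff fun e he =>
    if_neg fun ⟨k, hk⟩ => he ⟨k, hk.symm⟩]
  have hcomp : (fun e : ℕ => if g ∣ e then (e : ℝ) ^ (-s) else 0) ∘ (g * ·) =
      fun k : ℕ => (g : ℝ) ^ (-s) * (k : ℝ) ^ (-s) := funext fun k => by
    rw [Function.comp_apply, if_pos (dvd_mul_right g k), Nat.cast_mul,
      Real.mul_rpow g.cast_nonneg k.cast_nonneg]
  rw [hcomp]
  exact hzeta.hasSum.mul_left _

theorem gcd_le_sum_divisors_ite_dvd {R : ℕ} (hR : R ≠ 0) (e : ℕ) :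
    R.gcd e ≤ ∑ g ∈ R.divisors, if g ∣ e then g else 0 := by
  have hmem : R.gcd e ∈ R.divisors := Nat.mem_divisors.mpr ⟨R.gcd_dvd_left e, hR⟩
  simpa only [if_pos (R.gcd_dvd_right e)] using
    Finset.single_le_sum (f := fun g => if g ∣ e then g else 0) (fun _ _ => Nat.zero_le _) hmem

theorem summable_gcd_mul_rpow_neg (hs : 1 < s) {R : ℕ} (hR : R ≠ 0) :
    Summable fun e : ℕ => (R.gcd e : ℝ) * (e : ℝ) ^ (-s) := by
  refine .of_nonneg_of_le (fun e => by positivity) (fun e => ?_)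
    ((Real.summable_nat_rpow.mpr (neg_lt_neg hs)).mul_left (R : ℝ))
  gcongr
  exact Nat.gcd_le_left e (Nat.pos_of_ne_zero hR)

theorem tsum_gcd_mul_rpow_neg_le (hs : 1 < s) {R : ℕ} (hR : R ≠ 0) :
    ∑' e : ℕ, (R.gcd e : ℝ) * (e : ℝ) ^ (-s) ≤ R.divisors.card * ∑' n : ℕ, (n : ℝ) ^ (-s) := by
  have hsum := hasSum_sum (s := R.divisors) fun g hg =>
    (hasSum_ite_dvd_rpow_neg hs (Nat.pos_of_mem_divisors hg).ne').mul_left (g : ℝ)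
  calc ∑' e : ℕ, (R.gcd e : ℝ) * (e : ℝ) ^ (-s)
      ≤ ∑ g ∈ R.divisors, (g : ℝ) * ((g : ℝ) ^ (-s) * ∑' n : ℕ, (n : ℝ) ^ (-s)) := by
        rw [← hsum.tsum_eq]
        refine (summable_gcd_mul_rpow_neg hs hR).tsum_le_tsum (fun e => ?_) hsum.summable
        calc (R.gcd e : ℝ) * (e : ℝ) ^ (-s)
            ≤ (∑ g ∈ R.divisors, if g ∣ e then (g : ℝ) else 0) * (e : ℝ) ^ (-s) := by
              gcongr
              exact_mod_cast gcd_le_sum_divisors_ite_dvd hR e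
          _ = ∑ g ∈ R.divisors, (g : ℝ) * (if g ∣ e then (e : ℝ) ^ (-s) else 0) := by
              rw [Finset.sum_mul]
              simp only [ite_mul, zero_mul, mul_ite, mul_zero]
    _ ≤ ∑ _g ∈ R.divisors, ∑' n : ℕ, (n : ℝ) ^ (-s) := by
        refine Finset.sum_le_sum fun g hg => ?_
        have hg1 : (1 : ℝ) ≤ g := mod_cast Nat.pos_of_mem_divisors hg
        rw [← mul_assoc, ← Real.rpow_one_add' (by positivity) (by linarith)]
        exact mul_le_of_le_one_left (tsum_nonneg fun n => by positivity)
          (Real.rpow_le_one_of_one_le_of_nonpos hg1 (by linarith))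
    _ = R.divisors.card * ∑' n : ℕ, (n : ℝ) ^ (-s) := by rw [Finset.sum_const, nsmul_eq_mul]

-- Rankin's trick: `1 ≤ (e / D) ^ (s - t)` for every `e` that occurs in the tail.
theorem ite_lt_gcd_mul_rpow_neg_le (hts : t ≤ s) (hD : 0 < D) (R e : ℕ) :
    (if D < (e : ℝ) then (R.gcd e : ℝ) * (e : ℝ) ^ (-s) else 0) ≤
      D ^ (t - s) * ((R.gcd e : ℝ) * (e : ℝ) ^ (-t)) := by
  split_ifs with he
  · calc (R.gcd e : ℝ) * (e : ℝ) ^ (-s) = (e : ℝ) ^ (t - s) * (R.gcd e * (e : ℝ) ^ (-t)) := by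
          rw [mul_left_comm, ← Real.rpow_add (hD.trans he)]
          ring_nf
      _ ≤ D ^ (t - s) * (R.gcd e * (e : ℝ) ^ (-t)) := by
          refine mul_le_mul_of_nonneg_right ?_ (by positivity)
          exact Real.rpow_le_rpow_of_nonpos hD he.le (sub_nonpos.mpr hts)
  · positivity

theorem summable_gcd_mul_rpow_neg_tail (ht : 1 < t) (hts : t ≤ s) {R : ℕ} (hR : R ≠ 0)
    (hD : 0 < D) :
    Summable fun e : ℕ => if D < (e : ℝ) then (R.gcd e : ℝ) * (e : ℝ) ^ (-s) else 0 :=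
  .of_nonneg_of_le (fun e => by positivity) (ite_lt_gcd_mul_rpow_neg_le hts hD R)
    ((summable_gcd_mul_rpow_neg ht hR).mul_left _)

theorem tsum_gcd_mul_rpow_neg_tail_le (ht : 1 < t) (hts : t ≤ s) {R : ℕ} (hR : R ≠ 0)
    (hD : 0 < D) :
    ∑' e : ℕ, (if D < (e : ℝ) then (R.gcd e : ℝ) * (e : ℝ) ^ (-s) else 0) ≤
      D ^ (t - s) * (R.divisors.card * ∑' n : ℕ, (n : ℝ) ^ (-t)) := by
  refine ((summable_gcd_mul_rpow_neg_tail ht hts hR hD).tsum_le_tsum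
    (ite_lt_gcd_mul_rpow_neg_le hts hD R)
    ((summable_gcd_mul_rpow_neg ht hR).mul_left _)).trans ?_
  rw [tsum_mul_left]
  gcongr
  exact tsum_gcd_mul_rpow_neg_le ht hR

end GcdSum

section Resultant

variable {R : Type*} [CommRing R]

theorem exists_isPrimitive_associated_map [IsDomain R] [NormalizedGCDMonoid R] {K : Type*} [Field K]
    [Algebra R K] [IsFractionRing R K] {g : K[X]} (hg : g ≠ 0) :
    ∃ G : R[X], G.IsPrimitive ∧ Associated (G.map (algebraMap R K)) g := by
  set N := IsLocalization.integerNormalization (nonZeroDivisors R) g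
  obtain ⟨b, hb, hNb⟩ := IsLocalization.integerNormalization_spec (nonZeroDivisors R) g
  have hb0 : algebraMap R K b ≠ 0 := IsFractionRing.to_map_ne_zero_of_mem_nonZeroDivisors hb
  have hN0 : algebraMap R K N.content ≠ 0 := by
    rwa [map_ne_zero_iff _ (IsFractionRing.injective R K), Ne, content_eq_zero_iff,
      IsFractionRing.integerNormalization_eq_zero_iff]
  have hunit {a : K} (ha : a ≠ 0) : IsUnit (C a) := isUnit_C.mpr ha.isUnit
  refine ⟨N.primPart, N.isPrimitive_primPart, ?_⟩
  rw [← associated_isUnit_mul_left_iff (hunit hN0), ← associated_isUnit_mul_right_iff (hunit hb0),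
    ← map_C, ← Polynomial.map_mul, ← eq_C_content_mul_primPart, hNb, Algebra.smul_def]
  rfl

theorem squarefree_map_of_isPrimitive [IsDomain R] [NormalizedGCDMonoid R] {f : R[X]}
    (hf : f.IsPrimitive) (hsq : Squarefree f) (K : Type*) [Field K] [Algebra R K]
    [IsFractionRing R K] : Squarefree (f.map (algebraMap R K)) := by
  intro g hg
  have hf0 : f.map (algebraMap R K) ≠ 0 :=
    (Polynomial.map_ne_zero_iff (IsFractionRing.injective R K)).mpr hf.ne_zero
  have hg0 : g ≠ 0 := left_ne_zero_of_mul (ne_zero_of_dvd_ne_zero hf0 hg)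
  obtain ⟨G, hG, hGg⟩ := exists_isPrimitive_associated_map (R := R) hg0
  have hGG : G * G ∣ f := by
    rw [(hG.mul hG).dvd_iff_fraction_map_dvd_fraction_map K, Polynomial.map_mul]
    exact (hGg.mul_mul hGg).dvd.trans hg
  exact hGg.isUnit ((hsq G hGG).map (mapRingHom (algebraMap R K)))

theorem resultant_derivative_ne_zero [IsDomain R] [CharZero R] [NormalizedGCDMonoid R] {f : R[X]}
    (hf : f.IsPrimitive) (hsq : Squarefree f) : f.resultant (derivative f) ≠ 0 := by
  have hinj := IsFractionRing.injective R (FractionRing R)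
  have hsep := PerfectField.separable_iff_squarefree.mpr
    (squarefree_map_of_isPrimitive hf hsq (FractionRing R))
  have hres := resultant_ne_zero _ _ hsep
  rw [derivative_map, natDegree_map_eq_of_injective hinj, natDegree_map_eq_of_injective hinj,
    resultant_map_map] at hres
  exact ne_zero_of_map hres

theorem C_resultant_derivative_mem_span {f : R[X]} (hf : f.IsPrimitive) :
    C (f.resultant (derivative f)) ∈ Ideal.span {f, derivative f} := by
  rcases eq_or_ne f.natDegree 0 with h0 | h0
  · obtain ⟨a, rfl⟩ := natDegree_eq_zero.mp h0
    have hunit : IsUnit (C a) := isUnit_C.mpr (hf a dvd_rfl)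
    rw [Ideal.eq_top_of_isUnit_mem _ (Ideal.subset_span (Set.mem_insert _ _)) hunit]
    exact Submodule.mem_top
  · obtain ⟨p, q, -, -, hpq⟩ :=
      exists_mul_add_mul_eq_C_resultant f (derivative f) le_rfl le_rfl (Or.inl h0)
    exact Ideal.mem_span_pair.mpr ⟨p, q, by rw [← hpq]; ring⟩

variable {S : Type*} [CommRing S] [LinearOrder S] [IsStrictOrderedRing S]

theorem abv_resultant_le [Nontrivial R] (abv : AbsoluteValue R S) {f g : R[X]} {B : S}
    (hf : ∀ i, abv (f.coeff i) ≤ B) (hg : ∀ i, abv (g.coeff i) ≤ B) (m n : ℕ) :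
    abv (f.resultant g m n) ≤ (m + n).factorial • B ^ (m + n) := by
  have hB : abv 0 ≤ B := (abv.map_zero.trans_le (abv.nonneg _)).trans (hf 0)
  have hentry (i j : Fin (m + n)) : abv (sylvester f g m n i j) ≤ B := by
    induction j using Fin.addCases with
    | left j =>
      simp only [sylvester, Matrix.of_apply, Fin.addCases_left]
      split_ifs
      exacts [hg _, hB]
    | right j =>
      simp only [sylvester, Matrix.of_apply, Fin.addCases_right]
      split_ifs
      exacts [hf _, hB]
  simpa only [resultant, Fintype.card_fin] using Matrix.det_le hentry

end Resultant

section IntegerHeight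

variable {f : ℤ[X]} {d : ℕ} {H : ℝ}

theorem abs_coeff_derivative_le (hd : f.natDegree ≤ d) (hf : ∀ i, (|f.coeff i| : ℝ) ≤ H) (i : ℕ) :
    (|(derivative f).coeff i| : ℝ) ≤ d * H := by
  have hH : 0 ≤ H := (abs_nonneg _).trans (hf 0)
  rw [coeff_derivative]
  rcases lt_or_ge i d with hi | hi
  · have hid : (i : ℝ) + 1 ≤ d := mod_cast hi
    push_cast
    rw [abs_mul, abs_of_nonneg (by positivity : (0 : ℝ) ≤ i + 1), mul_comm]
    gcongr
    exact hf _
  · rw [coeff_eq_zero_of_natDegree_lt (by lia)]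
    simpa using by positivity

theorem abs_resultant_derivative_le (hd : f.natDegree ≤ d) (hH : 1 ≤ H)
    (hf : ∀ i, (|f.coeff i| : ℝ) ≤ H) :
    (|f.resultant (derivative f)| : ℝ) ≤ (2 * d).factorial * ((d + 1) * H) ^ (2 * d) := by
  have hdH : 0 ≤ d * H := by positivity
  have hdeg : f.natDegree + (derivative f).natDegree ≤ 2 * d := by
    have := natDegree_derivative_le f
    lia
  calc (|f.resultant (derivative f)| : ℝ)
      ≤ (f.natDegree + (derivative f).natDegree).factorial •
          ((d + 1) * H) ^ (f.natDegree + (derivative f).natDegree) :=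
        abv_resultant_le (AbsoluteValue.abs.comp (f := Int.castRingHom ℝ) Int.cast_injective)
          (fun i => (hf i).trans (by linarith))
          (fun i => (abs_coeff_derivative_le hd hf i).trans (by linarith)) _ _
    _ ≤ (2 * d).factorial * ((d + 1) * H) ^ (2 * d) := by
        rw [nsmul_eq_mul]
        gcongr
        linarith

end IntegerHeight

theorem aeval_intCast_zmod_eq_zero_iff (f : ℤ[X]) (m : ℕ) (a : ℤ) :
    aeval (a : ZMod m) f = 0 ↔ (m : ℤ) ∣ f.eval a := by
  rw [← ZMod.intCast_zmod_eq_zero_iff_dvd, ← eq_intCast (algebraMap ℤ (ZMod m)),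
    aeval_algebraMap_apply_eq_algebraMap_eval, eq_intCast]

theorem polyRho_eq_natCard (f : ℤ[X]) (m : ℕ) [NeZero m] :
    polyRho f m = Nat.card {x : ZMod m // aeval x f = 0} := by
  have haeval (n : ℕ) : aeval (n : ZMod m) f = 0 ↔ (m : ℤ) ∣ f.eval (n : ℤ) := by
    rw [← aeval_intCast_zmod_eq_zero_iff, Int.cast_natCast]
  rw [Nat.card_eq_fintype_card, Fintype.card_subtype, polyRho]
  refine Finset.card_nbij (fun n => (n : ZMod m)) (fun n hn => ?_) (fun a ha b hb hab => ?_)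
    fun x hx => ?_
  · simpa [haeval] using (Finset.mem_filter.mp hn).2
  · have ha' := Finset.mem_Icc.mp (Finset.mem_filter.mp ha).1
    have hb' := Finset.mem_Icc.mp (Finset.mem_filter.mp hb).1
    have hdvd := Nat.modEq_iff_dvd.mp ((ZMod.natCast_eq_natCast_iff a b m).mp hab)
    have := Int.eq_zero_of_abs_lt_dvd hdvd (by rw [abs_lt]; lia)
    lia
  · have hcast : (((x - 1).val + 1 : ℕ) : ZMod m) = x := by simp
    have hlt := ZMod.val_lt (x - 1)
    refine ⟨(x - 1).val + 1, ?_, hcast⟩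
    rw [Finset.coe_filter, Set.mem_ofPred_eq, Finset.mem_Icc, ← haeval, hcast]
    exact ⟨by lia, by simpa using hx⟩

theorem natCard_roots_of_algEquiv_prod {R A B₁ B₂ : Type*} [CommRing R] [Ring A] [Ring B₁]
    [Ring B₂] [Algebra R A] [Algebra R B₁] [Algebra R B₂] (φ : A ≃ₐ[R] B₁ × B₂) (f : R[X]) :
    Nat.card {x : A // aeval x f = 0} =
      Nat.card {x : B₁ // aeval x f = 0} * Nat.card {x : B₂ // aeval x f = 0} := by
  have hroot (x : A) : aeval x f = 0 ↔ aeval (φ x).1 f = 0 ∧ aeval (φ x).2 f = 0 := by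
    rw [← Prod.mk_eq_zero, ← aeval_prod_apply, aeval_algHom_apply,
      map_eq_zero_iff φ φ.injective]
  rw [← Nat.card_prod]
  exact Nat.card_congr ((φ.toEquiv.subtypeEquiv hroot).trans Equiv.subtypeProdEquivProd)

theorem polyRho_mul_of_coprime (f : ℤ[X]) {m n : ℕ} (hmn : m.Coprime n) :
    polyRho f (m * n) = polyRho f m * polyRho f n := by
  rcases eq_or_ne m 0 with rfl | hm
  · simp [polyRho]
  rcases eq_or_ne n 0 with rfl | hn
  · simp [polyRho]
  have : NeZero m := ⟨hm⟩
  have : NeZero n := ⟨hn⟩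
  let φ : ZMod (m * n) ≃ₐ[ℤ] ZMod m × ZMod n :=
    AlgEquiv.ofRingEquiv (f := ZMod.chineseRemainder hmn) fun a => by simp
  simp only [polyRho_eq_natCard, natCard_roots_of_algEquiv_prod φ]

theorem polyRho_prime_le {f : ℤ[X]} (hf : f.IsPrimitive) {p : ℕ} (hp : p.Prime) :
    polyRho f p ≤ f.natDegree := by
  have : Fact p.Prime := ⟨hp⟩
  have hfp : f.map (algebraMap ℤ (ZMod p)) ≠ 0 := fun h => by
    have hdvd : C (p : ℤ) ∣ f := (C_dvd_iff_dvd_coeff _ _).mpr fun i => by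
      rw [← ZMod.intCast_zmod_eq_zero_iff_dvd]
      simpa using congr_arg (coeff · i) h
    exact (Nat.prime_iff_prime_int.mp hp).not_isUnit (hf _ hdvd)
  calc polyRho f p = Nat.card {x : ZMod p // aeval x f = 0} := polyRho_eq_natCard f p
    _ = (f.rootSet (ZMod p)).ncard :=
      Nat.card_congr (Equiv.subtypeEquivRight fun x => by rw [mem_rootSet', and_iff_right hfp])
    _ ≤ f.natDegree := ncard_rootSet_le f (ZMod p)

theorem aeval_castHom_eq_zero (f : ℤ[X]) {m n : ℕ} (h : m ∣ n) {x : ZMod n} (hx : aeval x f = 0) :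
    aeval (ZMod.castHom h (ZMod m) x) f = 0 := by
  have hmap := aeval_algHom_apply (ZMod.castHom h (ZMod m)).toIntAlgHom x f
  rwa [hx, map_zero] at hmap

theorem polyRho_mul_le (f : ℤ[X]) (m n : ℕ) : polyRho f (m * n) ≤ polyRho f m * n := by
  rcases eq_or_ne m 0 with rfl | hm
  · simp [polyRho]
  rcases eq_or_ne n 0 with rfl | hn
  · simp [polyRho]
  have : NeZero m := ⟨hm⟩
  have : NeZero n := ⟨hn⟩
  let φ (x : {x : ZMod (m * n) // aeval x f = 0}) : {x : ZMod m // aeval x f = 0} × Fin n :=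
    (⟨_, aeval_castHom_eq_zero f (dvd_mul_right m n) x.2⟩,
      ⟨x.1.val / m, Nat.div_lt_of_lt_mul (ZMod.val_lt x.1)⟩)
  have hφ : φ.Injective := fun x y hxy => by
    obtain ⟨hmod, hdiv⟩ := Prod.mk.inj hxy
    rw [Subtype.mk.injEq, ZMod.castHom_apply, ZMod.castHom_apply, ZMod.cast_eq_val,
      ZMod.cast_eq_val, ZMod.natCast_eq_natCast_iff] at hmod
    refine Subtype.ext (ZMod.val_injective _ ?_)
    rw [← Nat.div_add_mod x.1.val m, ← Nat.div_add_mod y.1.val m, Fin.mk.inj hdiv, hmod]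
  simpa only [polyRho_eq_natCard, Nat.card_prod, Nat.card_fin] using
    Nat.card_le_card_of_injective φ hφ

theorem isCoprime_eval_derivative {A : Type*} [CommRing A] {f : A[X]} {R m a : A}
    (hR : C R ∈ Ideal.span {f, derivative f}) (hm : IsCoprime m R) (ha : m ∣ f.eval a) :
    IsCoprime m ((derivative f).eval a) := by
  obtain ⟨p, q, hpq⟩ := Ideal.mem_span_pair.mp hR
  obtain ⟨k, hk⟩ := ha
  have heval : p.eval a * (m * k) + q.eval a * (derivative f).eval a = R := by
    simpa only [eval_add, eval_mul, eval_C, hk] using congr_arg (eval a) hpq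
  rw [← heval, mul_left_comm, add_comm] at hm
  exact hm.of_add_mul_left_right.of_mul_right_right

theorem pow_dvd_sub_of_isCoprime_eval_derivative {A : Type*} [CommRing A] {f : A[X]} {m a b : A}
    {k : ℕ} (hm : IsCoprime m ((derivative f).eval a)) (hab : m ∣ b - a)
    (ha : m ^ k ∣ f.eval a) (hb : m ^ k ∣ f.eval b) : m ^ k ∣ b - a := by
  obtain ⟨c, hc⟩ := binomExpansion f a (b - a)
  obtain ⟨t, ht⟩ := hab
  have hfactor : f.eval b - f.eval a = ((derivative f).eval a + m * (t * c)) * (b - a) := by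
    rw [add_sub_cancel] at hc
    linear_combination hc + c * (b - a) * ht
  exact (hm.add_mul_left_right (t * c)).pow_left.dvd_of_dvd_mul_left (hfactor ▸ dvd_sub hb ha)

theorem polyRho_pow_le_of_isCoprime {f : ℤ[X]} {R : ℤ} (hR : C R ∈ Ideal.span {f, derivative f})
    {m k : ℕ} (hk : k ≠ 0) (hmR : IsCoprime (m : ℤ) R) : polyRho f (m ^ k) ≤ polyRho f m := by
  rcases eq_or_ne m 0 with rfl | hm
  · simp [polyRho, hk]
  have : NeZero m := ⟨hm⟩
  let φ (x : {x : ZMod (m ^ k) // aeval x f = 0}) : {x : ZMod m // aeval x f = 0} :=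
    ⟨_, aeval_castHom_eq_zero f (dvd_pow_self m hk) x.2⟩
  have hφ : φ.Injective := fun ⟨x, hx⟩ ⟨y, hy⟩ hxy => by
    obtain ⟨a, rfl⟩ := ZMod.intCast_surjective x
    obtain ⟨b, rfl⟩ := ZMod.intCast_surjective y
    rw [aeval_intCast_zmod_eq_zero_iff] at hx hy
    rw [Subtype.mk.injEq, map_intCast, map_intCast, ZMod.intCast_eq_intCast_iff_dvd_sub] at hxy
    rw [Subtype.mk.injEq, ZMod.intCast_eq_intCast_iff_dvd_sub]
    push_cast at hx hy ⊢
    have hma : (m : ℤ) ∣ f.eval a := (dvd_pow_self _ hk).trans hx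
    exact pow_dvd_sub_of_isCoprime_eval_derivative (isCoprime_eval_derivative hR hmR hma) hxy hx hy
  simpa only [polyRho_eq_natCard] using Nat.card_le_card_of_injective φ hφ

theorem polyRho_prime_sq_le {f : ℤ[X]} (hf : f.IsPrimitive) {R : ℤ}
    (hR : C R ∈ Ideal.span {f, derivative f}) {p : ℕ} (hp : p.Prime) :
    polyRho f (p ^ 2) ≤ f.natDegree * R.natAbs.gcd p := by
  have hdeg : polyRho f p ≤ f.natDegree := polyRho_prime_le hf hp
  by_cases hpR : p ∣ R.natAbs
  · rw [Nat.gcd_eq_right hpR, sq]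
    exact (polyRho_mul_le f p p).trans (Nat.mul_le_mul_right p hdeg)
  · have hcop : p.Coprime R.natAbs := hp.coprime_iff_not_dvd.mpr hpR
    rw [Nat.gcd_comm, hcop, mul_one]
    exact (polyRho_pow_le_of_isCoprime hR two_ne_zero
      (Int.isCoprime_iff_gcd_eq_one.mpr hcop)).trans hdeg

theorem polyRho_sq_le {f : ℤ[X]} (hf : f.IsPrimitive) {R : ℤ}
    (hR : C R ∈ Ideal.span {f, derivative f}) {e : ℕ} (he : Squarefree e) :
    polyRho f (e ^ 2) ≤ f.natDegree ^ ω e * R.natAbs.gcd e := by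
  induction e using Nat.recOnPosPrimePosCoprime with
  | zero => exact absurd he not_squarefree_zero
  | one => simp [polyRho]
  | prime_pow p n hp hn =>
    obtain rfl : n = 1 := ((Nat.squarefree_pow_iff hp.one_lt.ne' hn.ne').mp he).2
    simpa only [pow_one, ArithmeticFunction.cardDistinctFactors_apply_prime hp] using
      polyRho_prime_sq_le hf hR hp
  | coprime a b _ _ hab iha ihb =>
    calc polyRho f ((a * b) ^ 2) = polyRho f (a ^ 2) * polyRho f (b ^ 2) := by
          rw [mul_pow, polyRho_mul_of_coprime f (hab.pow 2 2)]
      _ ≤ (f.natDegree ^ ω a * R.natAbs.gcd a) * (f.natDegree ^ ω b * R.natAbs.gcd b) :=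
          Nat.mul_le_mul (iha he.of_mul_left) (ihb he.of_mul_right)
      _ = f.natDegree ^ ω (a * b) * R.natAbs.gcd (a * b) := by
          rw [ArithmeticFunction.cardDistinctFactors_mul hab, hab.gcd_mul, pow_add]
          ring

theorem exists_polyRho_sq_div_sq_le (d : ℕ) {η : ℝ} (hη : 0 < η) :
    ∃ K : ℝ, 0 < K ∧ ∀ {f : ℤ[X]}, f.IsPrimitive → f.natDegree ≤ d →
      ∀ {R : ℤ}, C R ∈ Ideal.span {f, derivative f} → ∀ {e : ℕ}, Squarefree e →
        (polyRho f (e ^ 2) : ℝ) / (e : ℝ) ^ 2 ≤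
          K * (R.natAbs.gcd e * (e : ℝ) ^ (-(2 - η))) := by
  obtain ⟨K, hK, hpow⟩ := exists_pow_cardDistinctFactors_le_rpow d hη
  refine ⟨K, hK, fun {f} hf hd R hR e he => ?_⟩
  have he0 : (0 : ℝ) < e := mod_cast he.ne_zero.bot_lt
  calc (polyRho f (e ^ 2) : ℝ) / (e : ℝ) ^ 2
      ≤ ((f.natDegree : ℝ) ^ ω e * R.natAbs.gcd e) / (e : ℝ) ^ 2 := by
        gcongr
        exact_mod_cast polyRho_sq_le hf hR he
    _ ≤ ((d : ℝ) ^ ω e * R.natAbs.gcd e) / (e : ℝ) ^ 2 := by gcongr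
    _ ≤ (K * (e : ℝ) ^ η * R.natAbs.gcd e) / (e : ℝ) ^ 2 := by
        gcongr
        exact hpow e he.ne_zero
    _ = K * (R.natAbs.gcd e * (e : ℝ) ^ (-(2 - η))) := by
        rw [neg_sub, Real.rpow_sub he0, Real.rpow_two]
        ring

theorem exists_tsum_polyRho_tail_le (d : ℕ) {δ : ℝ} (hδ : 0 < δ) (hδ1 : δ ≤ 1) :
    ∃ K : ℝ, 0 < K ∧ ∀ {f : ℤ[X]}, f.IsPrimitive → f.natDegree ≤ d →
      ∀ {R : ℤ}, R ≠ 0 → C R ∈ Ideal.span {f, derivative f} → ∀ {D : ℝ}, 0 < D →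
        ∑' e : ℕ, (if D < (e : ℝ) ∧ Squarefree e then
            (polyRho f (e ^ 2) : ℝ) / (e : ℝ) ^ 2 else 0) ≤
          K * R.natAbs.divisors.card * D ^ (δ - 1) := by
  obtain ⟨K, hK, hterm⟩ := exists_polyRho_sq_div_sq_le d (half_pos hδ)
  have ht : 1 < 1 + δ / 2 := by linarith
  have hts : 1 + δ / 2 ≤ 2 - δ / 2 := by linarith
  set Z : ℝ := ∑' n : ℕ, (n : ℝ) ^ (-(1 + δ / 2))
  have hZ : 0 < Z := (Real.summable_nat_rpow.mpr (neg_lt_neg ht)).tsum_pos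
    (fun n => by positivity) 1 (by simp)
  refine ⟨K * Z, by positivity, fun {f} hf hd R hR0 hR D hD => ?_⟩
  have hR0' : R.natAbs ≠ 0 := Int.natAbs_ne_zero.mpr hR0
  set tail : ℕ → ℝ :=
    fun e => if D < (e : ℝ) then (R.natAbs.gcd e : ℝ) * (e : ℝ) ^ (-(2 - δ / 2)) else 0 with htail
  have htail_sum : Summable tail := summable_gcd_mul_rpow_neg_tail ht hts hR0' hD
  have hle (e : ℕ) : (if D < (e : ℝ) ∧ Squarefree e then
      (polyRho f (e ^ 2) : ℝ) / (e : ℝ) ^ 2 else 0) ≤ K * tail e := by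
    split_ifs with he
    · simpa only [htail, if_pos he.1] using hterm hf hd hR he.2
    · positivity
  calc ∑' e : ℕ, (if D < (e : ℝ) ∧ Squarefree e then
          (polyRho f (e ^ 2) : ℝ) / (e : ℝ) ^ 2 else 0)
      ≤ ∑' e, K * tail e :=
        (Summable.of_nonneg_of_le (fun e => by positivity) hle (htail_sum.mul_left K)).tsum_le_tsum
          hle (htail_sum.mul_left K)
    _ = K * ∑' e, tail e := tsum_mul_left
    _ ≤ K * (D ^ (1 + δ / 2 - (2 - δ / 2)) * (R.natAbs.divisors.card * Z)) := by
        gcongr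
        exact tsum_gcd_mul_rpow_neg_tail_le ht hts hR0' hD
    _ = K * Z * R.natAbs.divisors.card * D ^ (δ - 1) := by
        rw [show 1 + δ / 2 - (2 - δ / 2) = δ - 1 by ring]
        ring

theorem exists_card_divisors_resultant_derivative_le (d : ℕ) {η : ℝ} (hη : 0 < η) :
    ∃ K : ℝ, 0 < K ∧ ∀ {f : ℤ[X]} {H : ℝ}, f.natDegree ≤ d → 1 ≤ H →
      (∀ i, (|f.coeff i| : ℝ) ≤ H) →
        ((f.resultant (derivative f)).natAbs.divisors.card : ℝ) ≤ K * H ^ η := by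
  set θ : ℝ := η / (2 * d + 1) with hθ
  obtain ⟨K, hK, hdiv⟩ := exists_card_divisors_le_rpow (η := θ) (by positivity)
  set B : ℝ := (2 * d).factorial * (d + 1) ^ (2 * d) with hB
  refine ⟨K * B ^ θ, by positivity, fun {f H} hd hH hf => ?_⟩
  have hres : ((f.resultant (derivative f)).natAbs : ℝ) ≤ B * H ^ (2 * d) := by
    rw [Nat.cast_natAbs, Int.cast_abs, hB, mul_assoc, ← mul_pow]
    exact abs_resultant_derivative_le hd hH hf
  have hexp : ((2 * d : ℕ) : ℝ) * θ ≤ η := by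
    rw [hθ, mul_div_left_comm]
    exact mul_le_of_le_one_right hη.le (div_le_one_of_le₀ (by push_cast; linarith) (by positivity))
  calc ((f.resultant (derivative f)).natAbs.divisors.card : ℝ)
      ≤ K * ((f.resultant (derivative f)).natAbs : ℝ) ^ θ := hdiv _
    _ ≤ K * (B * H ^ (2 * d)) ^ θ := by gcongr
    _ = K * B ^ θ * H ^ (((2 * d : ℕ) : ℝ) * θ) := by
        rw [Real.mul_rpow (by positivity) (by positivity), Real.rpow_natCast_mul (by positivity),
          mul_assoc]
    _ ≤ K * B ^ θ * H ^ η := by gcongr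

theorem rpow_sub_one_le_inv_mul_rpow {A δ D H : ℝ} (hδ : 0 ≤ δ) (hD : 0 < D) (hH : 0 ≤ H)
    (hDH : D ≤ H ^ A) : D ^ (δ - 1) ≤ D⁻¹ * H ^ (A * δ) := by
  rw [Real.rpow_sub_one hD.ne', div_eq_inv_mul, Real.rpow_mul hH]
  gcongr

/-- For a square-free polynomial `f` with coprime coefficients of height at most `H`,
and `D ≤ H^A`, one has `∑_{d > D squarefree} ρ_f(d²)/d² ≪ D⁻¹·H^ε`. -/
theorem sum_rho_tail_le (A ε : ℝ) (hA : 1 ≤ A) (hε : 0 < ε) (d : ℕ) :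
    ∃ C : ℝ, 0 < C ∧ ∀ (f : Polynomial ℤ) (H D : ℝ), 2 ≤ H →
      Squarefree f → f.natDegree ≤ d → f.content = 1 →
      (∀ i, (|f.coeff i| : ℝ) ≤ H) → 1 ≤ D → D ≤ H ^ A →
      (∑' e : ℕ, if D < (e : ℝ) ∧ Squarefree e then (polyRho f (e ^ 2) : ℝ) / (e : ℝ) ^ 2 else 0)
        ≤ C * D⁻¹ * H ^ ε := by
  set δ : ℝ := min 1 (ε / (2 * A))
  have hδ : 0 < δ := lt_min one_pos (by positivity)
  have hAδ : A * δ ≤ ε / 2 :=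
    (mul_le_mul_of_nonneg_left (min_le_right _ _) (by positivity)).trans_eq (by field_simp)
  obtain ⟨K₁, hK₁, htail⟩ := exists_tsum_polyRho_tail_le d hδ (min_le_left _ _)
  obtain ⟨K₂, hK₂, hdiv⟩ := exists_card_divisors_resultant_derivative_le d (half_pos hε)
  refine ⟨K₁ * K₂, by positivity, fun f H D hH hsq hd hcontent hcoeff hD hDH => ?_⟩
  have hf : f.IsPrimitive := isPrimitive_iff_content_eq_one.mpr hcontent
  have hH1 : 1 ≤ H := one_le_two.trans hH
  have hD0 : 0 < D := one_pos.trans_le hD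
  have hDδ : D ^ (δ - 1) ≤ D⁻¹ * H ^ (ε / 2) :=
    (rpow_sub_one_le_inv_mul_rpow hδ.le hD0 (by positivity) hDH).trans (by gcongr)
  refine (htail hf hd (resultant_derivative_ne_zero hf hsq) (C_resultant_derivative_mem_span hf)
    hD0).trans ?_
  calc K₁ * (f.resultant (derivative f)).natAbs.divisors.card * D ^ (δ - 1)
      ≤ K₁ * (K₂ * H ^ (ε / 2)) * (D⁻¹ * H ^ (ε / 2)) := by gcongr; exact hdiv hd hH1 hcoeff
    _ = K₁ * K₂ * D⁻¹ * H ^ ε := by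
        rw [← add_halves ε, Real.rpow_add (by positivity), add_halves]
        ring
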